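/- Eulerian rewriting of the Wunsch equation: let I ⊆ ℝ be an interval and u : I × S¹ → ℝ smooth with ∫_{S¹} u(t,θ) dθ = 0 for each t, and set ω = H(∂_θ u) (Hilbert transform in θ at each fixed t). If ∂_t ω + u ∂_θ ω + 2 (∂_θ u) ω = 0 pointwise, then pointwise on I × S¹: ∂_t ∂_θ u + u ∂²_θ u + (∂_θ u)² = u ∂²_θ u + H(u · H(∂²_θ u)) + ω², i.e. ∂_t∂_θu + u∂²_θu + (∂_θu)² = −F + ω² with F = −u·∂²_θu − H(u·H(∂²_θu)). -/

import Mathlib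

open MeasureTheory Real

/-- The `n`-th Fourier coefficient of a `2π`-periodic function `f : ℝ → ℝ`. -/
noncomputable def fourierC (f : ℝ → ℝ) (n : ℤ) : ℂ :=
  (1 / (2 * π)) * ∫ θ in (0:ℝ)..(2 * π), (f θ : ℂ) * Complex.exp (-Complex.I * (n : ℂ) * (θ : ℂ))

/-- The Hilbert transform on the circle, sending `Σ cₙ e^{inθ}` to `Σ (−i sgn n) cₙ e^{inθ}`. -/
noncomputable def hilbertT (f : ℝ → ℝ) (θ : ℝ) : ℝ :=
  (∑' n : ℤ, -Complex.I * ((n.sign : ℤ) : ℂ) * fourierC f n *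
    Complex.exp (Complex.I * (n : ℂ) * (θ : ℂ))).re

open Filter Topology

/-- `F` is the sum of the absolutely convergent Fourier series with coefficients `a`. -/
def IsC (F : ℝ → ℂ) (a : ℤ → ℂ) : Prop :=
  Summable (fun n => ‖a n‖) ∧
    ∀ θ : ℝ, HasSum (fun n : ℤ => a n * Complex.exp (Complex.I * (n : ℂ) * (θ : ℂ))) (F θ)

lemma norm_e (n : ℤ) (θ : ℝ) : ‖Complex.exp (Complex.I * (n : ℂ) * (θ : ℂ))‖ = 1 := by
  have : Complex.I * (n : ℂ) * (θ : ℂ) = ((n * θ : ℝ) : ℂ) * Complex.I := by push_cast; ring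
  rw [this, Complex.norm_exp_ofReal_mul_I]

lemma norm_e' (n : ℤ) (θ : ℝ) : ‖Complex.exp (-Complex.I * (n : ℂ) * (θ : ℂ))‖ = 1 := by
  have := norm_e (-n) θ
  rw [← this]; push_cast; ring_nf

lemma exp_period (n : ℤ) : Complex.exp (Complex.I * (n : ℂ) * ((2 * π : ℝ) : ℂ)) = 1 := by
  rw [Complex.exp_eq_one_iff]; exact ⟨n, by push_cast; ring⟩

lemma isC_of_summable {a : ℤ → ℂ} (ha : Summable (fun n => ‖a n‖)) :
    IsC (fun θ => ∑' n : ℤ, a n * Complex.exp (Complex.I * (n : ℂ) * (θ : ℂ))) a := by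
  refine ⟨ha, fun θ => Summable.hasSum ?_⟩
  apply Summable.of_norm
  simpa [norm_mul, norm_e] using ha

lemma int_exp (k : ℤ) : ∫ θ in (0:ℝ)..(2 * π), Complex.exp (Complex.I * (k : ℂ) * (θ : ℂ))
    = if k = 0 then (2 * π : ℂ) else 0 := by
  split_ifs with h
  · simp [h]
  · rw [integral_exp_mul_complex]
    · rw [exp_period]; simp
    · simp [h]

lemma IsC.coeff {F : ℝ → ℂ} {a : ℤ → ℂ} (h : IsC F a) (n : ℤ) :
    (1 / (2 * π) : ℂ) * ∫ θ in (0:ℝ)..(2 * π), F θ * Complex.exp (-Complex.I * (n : ℂ) * (θ : ℂ))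
      = a n := by
  have key : HasSum (fun k : ℤ => ∫ θ in (0:ℝ)..(2 * π),
      a k * Complex.exp (Complex.I * (k : ℂ) * (θ : ℂ)) *
        Complex.exp (-Complex.I * (n : ℂ) * (θ : ℂ)))
      (∫ θ in (0:ℝ)..(2 * π), F θ * Complex.exp (-Complex.I * (n : ℂ) * (θ : ℂ))) := by
    apply intervalIntegral.hasSum_integral_of_dominated_convergence (fun k _ => ‖a k‖)
    · intro k
      apply Continuous.aestronglyMeasurable
      fun_prop
    · intro k
      refine Eventually.of_forall fun θ _ => ?_
      rw [norm_mul, norm_mul, norm_e, norm_e']; simp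
    · exact Eventually.of_forall fun θ _ => h.1
    · simp
    · exact Eventually.of_forall fun θ _ => (h.2 θ).mul_right _
  have e1 : ∀ k : ℤ, ∫ θ in (0:ℝ)..(2 * π),
      a k * Complex.exp (Complex.I * (k : ℂ) * (θ : ℂ)) *
        Complex.exp (-Complex.I * (n : ℂ) * (θ : ℂ)) = if k = n then a n * (2 * π) else 0 := by
    intro k
    have : ∀ θ : ℝ, a k * Complex.exp (Complex.I * (k : ℂ) * (θ : ℂ)) *
        Complex.exp (-Complex.I * (n : ℂ) * (θ : ℂ)) =
        a k * Complex.exp (Complex.I * ((k - n : ℤ) : ℂ) * (θ : ℂ)) := by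
      intro θ
      rw [mul_assoc, ← Complex.exp_add]; push_cast; ring_nf
    simp_rw [this]
    rw [intervalIntegral.integral_const_mul, int_exp]
    by_cases hk : k = n
    · simp [hk]
    · simp [hk, sub_eq_zero]
  simp_rw [e1] at key
  have k2 := hasSum_ite_eq n (a n * (2 * π))
  rw [key.unique k2]
  have : (π : ℂ) ≠ 0 := by exact_mod_cast Real.pi_ne_zero
  field_simp

lemma IsC.fourierC {f : ℝ → ℝ} {a : ℤ → ℂ} (h : IsC (fun x => (f x : ℂ)) a) (n : ℤ) :
    fourierC f n = a n := h.coeff n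

lemma IsC.coeff_unique {F : ℝ → ℂ} {a b : ℤ → ℂ} (h : IsC F a) (h' : IsC F b) : a = b := by
  funext n; rw [← h.coeff n, h'.coeff n]

lemma IsC.fun_unique {F G : ℝ → ℂ} {a : ℤ → ℂ} (h : IsC F a) (h' : IsC G a) : F = G := by
  funext θ; exact (h.2 θ).unique (h'.2 θ)

lemma IsC.add {F G : ℝ → ℂ} {a b : ℤ → ℂ} (h : IsC F a) (h' : IsC G b) :
    IsC (fun x => F x + G x) (fun n => a n + b n) := by
  refine ⟨(h.1.add h'.1).of_nonneg_of_le (fun _ => norm_nonneg _) fun n => norm_add_le _ _, ?_⟩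
  intro θ
  simpa [add_mul] using (h.2 θ).add (h'.2 θ)

lemma IsC.const_mul {F : ℝ → ℂ} {a : ℤ → ℂ} (c : ℂ) (h : IsC F a) :
    IsC (fun x => c * F x) (fun n => c * a n) := by
  refine ⟨by simpa using h.1.mul_left ‖c‖, ?_⟩
  intro θ
  simpa [mul_assoc] using (h.2 θ).mul_left c

lemma IsC.conj {F : ℝ → ℂ} {a : ℤ → ℂ} (h : IsC F a) :
    IsC (fun x => (starRingEnd ℂ) (F x)) (fun n => (starRingEnd ℂ) (a (-n))) := by
  refine ⟨?_, ?_⟩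
  · have := (Equiv.neg ℤ).summable_iff.mpr h.1
    simpa [Function.comp_def] using this
  · intro θ
    have h1 := (Equiv.neg ℤ).hasSum_iff.mpr (h.2 θ)
    have h2 := Complex.hasSum_conj'.mpr h1
    convert h2 using 2 with n
    simp [← Complex.exp_conj]

lemma IsC.mul {F G : ℝ → ℂ} {a b : ℤ → ℂ} (h : IsC F a) (h' : IsC G b) :
    IsC (fun x => F x * G x) (fun n => ∑' k, a k * b (n - k)) := by
  let eqv : ℤ × ℤ ≃ ℤ × ℤ :=
    { toFun := fun p => (p.2, p.1 - p.2)
      invFun := fun p => (p.1 + p.2, p.1)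
      left_inv := fun p => by simp
      right_inv := fun p => by simp }
  have hs : Summable (fun p : ℤ × ℤ => ‖a p.1 * b p.2‖) := by
    simpa [norm_mul] using summable_mul_of_summable_norm (f := fun n => ‖a n‖)
      (g := fun n => ‖b n‖) (by simpa using h.1) (by simpa using h'.1)
  have hs2 : Summable (fun p : ℤ × ℤ => ‖a p.2 * b (p.1 - p.2)‖) :=
    (eqv.summable_iff (f := fun p : ℤ × ℤ => ‖a p.1 * b p.2‖)).mpr hs
  have hs3 : ∀ n, Summable (fun k => ‖a k * b (n - k)‖) := fun n => Summable.prod_factor hs2 n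
  refine ⟨?_, ?_⟩
  · refine (hs2.prod).of_nonneg_of_le (fun _ => norm_nonneg _) fun n => ?_
    exact norm_tsum_le_tsum_norm (hs3 n)
  · intro θ
    have nF : Summable (fun n : ℤ => ‖a n * Complex.exp (Complex.I * (n : ℂ) * (θ : ℂ))‖) := by
      simpa [norm_mul, norm_e] using h.1
    have nG : Summable (fun n : ℤ => ‖b n * Complex.exp (Complex.I * (n : ℂ) * (θ : ℂ))‖) := by
      simpa [norm_mul, norm_e] using h'.1
    have hFG := summable_mul_of_summable_norm nF nG
    have h1 := (h.2 θ).mul (h'.2 θ) hFG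
    have h2 := eqv.hasSum_iff.mpr h1
    refine h2.prod_fiberwise fun n => ?_
    have h3 := ((hs3 n).of_norm.hasSum).mul_right (Complex.exp (Complex.I * (n : ℂ) * (θ : ℂ)))
    convert h3 using 2 with k
    simp only [eqv, Function.comp_apply, Equiv.coe_fn_mk]
    have : Complex.exp (Complex.I * (n : ℂ) * (θ : ℂ)) =
      Complex.exp (Complex.I * (k : ℂ) * (θ : ℂ)) *
      Complex.exp (Complex.I * ((n - k : ℤ) : ℂ) * (θ : ℂ)) := by
      rw [← Complex.exp_add]; push_cast; ring_nf
    rw [this]; ring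

lemma norm_sign_mul_le (n : ℤ) (z : ℂ) : ‖-Complex.I * ((n.sign : ℤ) : ℂ) * z‖ ≤ ‖z‖ := by
  rcases lt_trichotomy n 0 with h | h | h
  · simp [Int.sign_eq_neg_one_of_neg h]
  · simp [h]
  · simp [Int.sign_eq_one_of_pos h]

lemma IsC.hilbert {f : ℝ → ℝ} {a : ℤ → ℂ} (h : IsC (fun x => (f x : ℂ)) a) :
    IsC (fun x => (hilbertT f x : ℂ)) (fun n => -Complex.I * ((n.sign : ℤ) : ℂ) * a n) := by
  have hs : Summable (fun n : ℤ => ‖-Complex.I * ((n.sign : ℤ) : ℂ) * a n‖) :=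
    h.1.of_nonneg_of_le (fun _ => norm_nonneg _) fun n => norm_sign_mul_le n _
  have h1 := isC_of_summable hs
  have hc : ∀ n, (starRingEnd ℂ) (a (-n)) = a n := by
    intro n
    have h2 := h.conj
    simp only [Complex.conj_ofReal] at h2
    exact congrFun (h2.coeff_unique h) n
  have h3 := h1.conj
  have e : (fun n : ℤ => (starRingEnd ℂ) (-Complex.I * (((-n).sign : ℤ) : ℂ) * a (-n))) =
      (fun n : ℤ => -Complex.I * ((n.sign : ℤ) : ℂ) * a n) := by
    funext n
    simp [hc]
  rw [e] at h3
  have h4 := h3.fun_unique h1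
  convert h1 using 2 with θ
  have h5 := congrFun h4 θ
  rw [Complex.conj_eq_iff_re] at h5
  rw [← h5, hilbertT]
  simp_rw [h.fourierC]

lemma hilbert_hilbert {f : ℝ → ℝ} {a : ℤ → ℂ} (h : IsC (fun x => (f x : ℂ)) a) (h0 : a 0 = 0)
    (θ : ℝ) : hilbertT (hilbertT f) θ = - f θ := by
  have h1 := h.hilbert.hilbert
  have h2 := h.const_mul (-1)
  have e : (fun n : ℤ => -Complex.I * ((n.sign : ℤ) : ℂ) *
      (-Complex.I * ((n.sign : ℤ) : ℂ) * a n)) = fun n => -1 * a n := by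
    funext n
    rcases lt_trichotomy n 0 with h | h | h
    · simp [Int.sign_eq_neg_one_of_neg h, ← mul_assoc]
    · simp [h, h0]
    · simp [Int.sign_eq_one_of_pos h, ← mul_assoc]
  rw [e] at h1
  have := congrFun (h1.fun_unique h2) θ
  have h3 : (hilbertT (hilbertT f) θ : ℂ) = ((- f θ : ℝ) : ℂ) := by rw [this]; push_cast; ring
  exact_mod_cast h3

lemma hilbert_add {f g : ℝ → ℝ} {a b : ℤ → ℂ} (h : IsC (fun x => (f x : ℂ)) a)
    (h' : IsC (fun x => (g x : ℂ)) b) (θ : ℝ) :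
    hilbertT (fun x => f x + g x) θ = hilbertT f θ + hilbertT g θ := by
  have h1 := h.add h'
  have h2 : IsC (fun x => ((f x + g x : ℝ) : ℂ)) (fun n => a n + b n) := by simpa using h1
  have h3 := h2.hilbert
  have h4 := h.hilbert.add h'.hilbert
  simp_rw [← mul_add] at h4
  have := congrFun (h3.fun_unique h4) θ
  exact_mod_cast this

lemma hilbert_const_mul {f : ℝ → ℝ} {a : ℤ → ℂ} (c : ℝ) (h : IsC (fun x => (f x : ℂ)) a) (θ : ℝ) :
    hilbertT (fun x => c * f x) θ = c * hilbertT f θ := by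
  have h1 := h.const_mul (c : ℂ)
  have h2 : IsC (fun x => ((c * f x : ℝ) : ℂ)) (fun n => c * a n) := by simpa using h1
  have h3 := h2.hilbert
  have h4 := h.hilbert.const_mul (c : ℂ)
  have e : (fun n : ℤ => (c : ℂ) * (-Complex.I * ((n.sign : ℤ) : ℂ) * a n)) =
      fun n : ℤ => -Complex.I * ((n.sign : ℤ) : ℂ) * (c * a n) := by
    funext n; ring
  rw [e] at h4
  have := congrFun (h3.fun_unique h4) θ
  exact_mod_cast this

/-- The quadratic identity `2 H(f Hf) = (Hf)² - f²` for mean-zero `f`. -/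
lemma hilbert_quad {f : ℝ → ℝ} {a : ℤ → ℂ} (h : IsC (fun x => (f x : ℂ)) a) (h0 : a 0 = 0)
    (θ : ℝ) : 2 * hilbertT (fun x => f x * hilbertT f x) θ = (hilbertT f θ) ^ 2 - (f θ) ^ 2 := by
  set p : ℤ → ℂ := fun n => if 0 < n then a n else 0 with hp
  set q : ℤ → ℂ := fun n => if n < 0 then a n else 0 with hq
  have sp : Summable (fun n => ‖p n‖) := by
    refine h.1.of_nonneg_of_le (fun _ => norm_nonneg _) fun n => ?_
    simp only [hp]; split_ifs <;> simp
  have sq : Summable (fun n => ‖q n‖) := by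
    refine h.1.of_nonneg_of_le (fun _ => norm_nonneg _) fun n => ?_
    simp only [hq]; split_ifs <;> simp
  have hP := isC_of_summable sp
  have hQ := isC_of_summable sq
  set P := fun θ : ℝ => ∑' n : ℤ, p n * Complex.exp (Complex.I * (n : ℂ) * (θ : ℂ))
  set Q := fun θ : ℝ => ∑' n : ℤ, q n * Complex.exp (Complex.I * (n : ℂ) * (θ : ℂ))
  have e1 : (fun n => p n + q n) = a := by
    funext n
    rcases lt_trichotomy n 0 with h | h | h
    · simp [hp, hq, h, h.not_gt]
    · simp [hp, hq, h, h0]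
    · simp [hp, hq, h, h.not_gt]
  have e2 : (fun n : ℤ => -Complex.I * (p n + -1 * q n)) =
      fun n : ℤ => -Complex.I * ((n.sign : ℤ) : ℂ) * a n := by
    funext n
    rcases lt_trichotomy n 0 with h | h | h
    · simp [hp, hq, h, h.not_gt, Int.sign_eq_neg_one_of_neg h]
    · simp [hp, hq, h]
    · simp [hp, hq, h, h.not_gt, Int.sign_eq_one_of_pos h]
  have f1 : ∀ x, (f x : ℂ) = P x + Q x := by
    have := hP.add hQ
    rw [e1] at this
    exact fun x => congrFun (h.fun_unique this) x
  have f2 : ∀ x, (hilbertT f x : ℂ) = -Complex.I * (P x + -1 * Q x) := by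
    have := (hP.add (hQ.const_mul (-1))).const_mul (-Complex.I)
    rw [e2] at this
    exact fun x => congrFun (h.hilbert.fun_unique this) x
  have hPP := hP.mul hP
  have hQQ := hQ.mul hQ
  set pp := fun n => ∑' k, p k * p (n - k) with hpp
  set qq := fun n => ∑' k, q k * q (n - k) with hqq
  have pp0 : ∀ n, n ≤ 0 → pp n = 0 := by
    intro n hn
    simp only [hpp]
    rw [← tsum_zero (α := ℂ) (β := ℤ)]
    congr 1; funext k
    by_cases hk : 0 < k
    · have : ¬ (0 < n - k) := by omega
      simp only [hp, if_neg this, mul_zero]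
    · simp only [hp, if_neg hk, zero_mul]
  have qq0 : ∀ n, 0 ≤ n → qq n = 0 := by
    intro n hn
    simp only [hqq]
    rw [← tsum_zero (α := ℂ) (β := ℤ)]
    congr 1; funext k
    by_cases hk : k < 0
    · have : ¬ (n - k < 0) := by omega
      simp only [hq, if_neg this, mul_zero]
    · simp only [hq, if_neg hk, zero_mul]
  have g1 : IsC (fun x => ((f x * hilbertT f x : ℝ) : ℂ))
      (fun n => -Complex.I * (pp n + -1 * qq n)) := by
    have := (hPP.add (hQQ.const_mul (-1))).const_mul (-Complex.I)
    convert this using 2 with x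
    push_cast
    rw [f1, f2]; ring
  have g2 := g1.hilbert
  have g3 := (hPP.add hQQ).const_mul (-1)
  have e3 : (fun n : ℤ => -Complex.I * ((n.sign : ℤ) : ℂ) * (-Complex.I * (pp n + -1 * qq n))) =
      fun n => -1 * (pp n + qq n) := by
    funext n
    have hI := Complex.I_mul_I
    rcases lt_trichotomy n 0 with h | h | h
    · rw [Int.sign_eq_neg_one_of_neg h, pp0 n h.le]; push_cast
      linear_combination (qq n) * hI
    · simp [h, pp0 0 le_rfl, qq0 0 le_rfl]
    · rw [Int.sign_eq_one_of_pos h, qq0 n h.le]; push_cast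
      linear_combination (pp n) * hI
  rw [e3] at g2
  have g4 := congrFun (g2.fun_unique g3) θ
  have : ((2 * hilbertT (fun x => f x * hilbertT f x) θ : ℝ) : ℂ) =
      ((hilbertT f θ) ^ 2 - (f θ) ^ 2 : ℝ) := by
    push_cast
    rw [g4, f1, f2]
    linear_combination -(P θ - Q θ) ^ 2 * Complex.I_mul_I
  exact_mod_cast this

lemma fourierC_deriv {f : ℝ → ℝ} (hf : ContDiff ℝ (⊤ : ℕ∞) f) (hp : ∀ x, f (x + 2 * π) = f x)
    (n : ℤ) : fourierC (deriv f) n = Complex.I * n * fourierC f n := by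
  have hd : Differentiable ℝ f := (contDiff_infty_iff_deriv.mp hf).1
  have hc : Continuous (deriv f) := (contDiff_infty_iff_deriv.mp hf).2.continuous
  have hcf : Continuous f := hf.continuous
  have he : ∀ x : ℝ, HasDerivAt (fun x : ℝ => Complex.exp (-Complex.I * (n : ℂ) * (x : ℂ)))
      (Complex.exp (-Complex.I * (n : ℂ) * (x : ℂ)) * (-Complex.I * n)) x := by
    intro x
    have h1 : HasDerivAt (fun x : ℝ => -Complex.I * (n : ℂ) * (x : ℂ)) (-Complex.I * n) x := by
      simpa using (Complex.ofRealCLM.hasDerivAt (x := x)).const_mul (-Complex.I * (n : ℂ))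
    exact h1.cexp
  have h := intervalIntegral.integral_eq_sub_of_hasDerivAt (a := 0) (b := 2 * π)
    (f := fun x : ℝ => (f x : ℂ) * Complex.exp (-Complex.I * (n : ℂ) * (x : ℂ)))
    (f' := fun x : ℝ => ((deriv f x : ℝ) : ℂ) * Complex.exp (-Complex.I * (n : ℂ) * (x : ℂ)) +
      (f x : ℂ) * (Complex.exp (-Complex.I * (n : ℂ) * (x : ℂ)) * (-Complex.I * n)))
    (fun x _ => ((hd x).hasDerivAt.ofReal_comp).mul (he x))
    (Continuous.intervalIntegrable (by fun_prop) _ _)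
  rw [intervalIntegral.integral_add (Continuous.intervalIntegrable (by fun_prop) _ _)
    (Continuous.intervalIntegrable (by fun_prop) _ _)] at h
  have e0 : Complex.exp (-Complex.I * (n : ℂ) * ((2 * π : ℝ) : ℂ)) = 1 := by
    have := exp_period (-n)
    rw [← this]; push_cast; ring_nf
  have e1 : f (2 * π) = f 0 := by simpa using hp 0
  rw [e0, e1] at h
  simp_rw [← mul_assoc (f _ : ℂ)] at h
  rw [intervalIntegral.integral_mul_const] at h
  simp only [Complex.ofReal_zero, mul_zero, Complex.exp_zero, sub_self] at h
  unfold fourierC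
  linear_combination (1 / (2 * π) : ℂ) * h

lemma periodic_deriv {f : ℝ → ℝ} (hp : ∀ x, f (x + 2 * π) = f x) (x : ℝ) :
    deriv f (x + 2 * π) = deriv f x := by
  rw [← deriv_comp_add_const]
  congr 1; funext y; exact hp y

lemma smooth_deriv {f : ℝ → ℝ} (hf : ContDiff ℝ (⊤ : ℕ∞) f) : ContDiff ℝ (⊤ : ℕ∞) (deriv f) :=
  (contDiff_infty_iff_deriv.mp hf).2

lemma fourierC_norm_le {f : ℝ → ℝ} {C : ℝ} (h : ∀ x ∈ Set.Icc 0 (2 * π), |f x| ≤ C) (n : ℤ) :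
    ‖fourierC f n‖ ≤ C := by
  have hpi := Real.pi_pos
  have h1 : ‖∫ θ in (0:ℝ)..(2 * π), (f θ : ℂ) * Complex.exp (-Complex.I * (n : ℂ) * (θ : ℂ))‖
      ≤ C * |2 * π - 0| := by
    apply intervalIntegral.norm_integral_le_of_norm_le_const
    intro x hx
    rw [Set.uIoc_of_le (by positivity)] at hx
    rw [norm_mul, norm_e', mul_one, Complex.norm_real]
    exact h x ⟨hx.1.le, hx.2⟩
  rw [sub_zero, abs_of_pos (by positivity)] at h1
  unfold fourierC
  rw [norm_mul]
  have : ‖(1 / (2 * π) : ℂ)‖ = 1 / (2 * π) := by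
    simp [abs_of_pos hpi]
  rw [this]
  calc _ ≤ 1 / (2 * π) * (C * (2 * π)) := by gcongr
    _ = C := by field_simp

lemma fourierC_deriv2 {f : ℝ → ℝ} (hf : ContDiff ℝ (⊤ : ℕ∞) f) (hp : ∀ x, f (x + 2 * π) = f x)
    (n : ℤ) : fourierC (deriv (deriv f)) n = - (n : ℂ) ^ 2 * fourierC f n := by
  rw [fourierC_deriv (smooth_deriv hf) (periodic_deriv hp), fourierC_deriv hf hp]
  linear_combination (n : ℂ) ^ 2 * fourierC f n * Complex.I_mul_I

lemma summable_fourierC {f : ℝ → ℝ} (hf : ContDiff ℝ (⊤ : ℕ∞) f)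
    (hp : ∀ x, f (x + 2 * π) = f x) : Summable (fun n => ‖fourierC f n‖) := by
  obtain ⟨C, hC⟩ := (isCompact_Icc (a := (0:ℝ)) (b := 2 * π)).exists_bound_of_continuousOn
    (smooth_deriv (smooth_deriv hf)).continuous.continuousOn
  have h1 : Summable (fun n : ℤ => C * (1 / (n : ℝ) ^ 2)) :=
    (Real.summable_one_div_int_pow.mpr (by norm_num)).mul_left C
  refine Summable.of_norm_bounded_eventually h1 ?_
  have : ∀ᶠ n : ℤ in cofinite, n ≠ 0 :=
    (Set.finite_singleton (0 : ℤ)).compl_mem_cofinite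
  filter_upwards [this] with n hn
  have h2 := fourierC_norm_le (f := deriv (deriv f)) (C := C) (by simpa using hC) n
  rw [fourierC_deriv2 hf hp, norm_mul] at h2
  have hn' : 0 < (n : ℝ) ^ 2 := by positivity
  rw [norm_norm, mul_one_div, le_div_iff₀ hn']
  have e : ‖-(n : ℂ) ^ 2‖ = (n : ℝ) ^ 2 := by simp
  rw [e] at h2
  linarith

lemma smooth_isC {f : ℝ → ℝ} (hf : ContDiff ℝ (⊤ : ℕ∞) f)
    (hp : ∀ x, f (x + 2 * π) = f x) : IsC (fun x => (f x : ℂ)) (fourierC f) := by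
  refine ⟨summable_fourierC hf hp, fun θ => ?_⟩
  have : Fact (0 < 2 * π) := ⟨by positivity⟩
  have hper : Function.Periodic (fun x => (f x : ℂ)) (2 * π) := fun x => by simp [hp]
  have hcont : Continuous (fun x => (f x : ℂ)) := Complex.continuous_ofReal.comp hf.continuous
  let F : C(AddCircle (2 * π), ℂ) := ⟨hper.lift, hcont.quotient_lift _⟩
  have hF : ∀ x : ℝ, F (x : AddCircle (2 * π)) = f x := fun x => hper.lift_coe x
  have hpi : (π : ℂ) ≠ 0 := by exact_mod_cast Real.pi_ne_zero
  have hco : ∀ n, fourierCoeff F n = fourierC f n := by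
    intro n
    rw [fourierCoeff_eq_intervalIntegral _ n 0, fourierC, zero_add, Complex.real_smul]
    congr 1
    · push_cast; rfl
    · apply intervalIntegral.integral_congr
      intro x _
      simp only [hF, fourier_coe_apply, smul_eq_mul]
      rw [mul_comm]
      congr 2
      push_cast
      field_simp
  have hs : Summable (fourierCoeff F) := by
    have : fourierCoeff F = fourierC f := funext hco
    rw [this]
    exact (summable_fourierC hf hp).of_norm
  have := has_pointwise_sum_fourier_series_of_summable hs (θ : AddCircle (2 * π))
  rw [hF] at this
  convert this using 2 with n
  rw [hco, fourier_coe_apply, smul_eq_mul]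
  congr 2
  push_cast
  field_simp

lemma hilbert_hasDerivAt {f : ℝ → ℝ} (hf : ContDiff ℝ (⊤ : ℕ∞) f)
    (hp : ∀ x, f (x + 2 * π) = f x) (θ : ℝ) :
    HasDerivAt (hilbertT f) (hilbertT (deriv f) θ) θ := by
  have h1 := (smooth_isC hf hp).hilbert
  have h2 := (smooth_isC (smooth_deriv hf) (periodic_deriv hp)).hilbert
  have key := hasDerivAt_tsum (𝕜 := ℝ) (F := ℂ) h2.1
    (g := fun (n : ℤ) (x : ℝ) => -Complex.I * ((n.sign : ℤ) : ℂ) * fourierC f n *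
      Complex.exp (Complex.I * (n : ℂ) * (x : ℂ)))
    (g' := fun (n : ℤ) (x : ℝ) => -Complex.I * ((n.sign : ℤ) : ℂ) * fourierC (deriv f) n *
      Complex.exp (Complex.I * (n : ℂ) * (x : ℂ))) (y₀ := 0)
    (by
      intro n x
      have h3 : HasDerivAt (fun x : ℝ => Complex.I * (n : ℂ) * (x : ℂ)) (Complex.I * n) x := by
        simpa using (Complex.ofRealCLM.hasDerivAt (x := x)).const_mul (Complex.I * (n : ℂ))
      have h4 := h3.cexp.const_mul (-Complex.I * ((n.sign : ℤ) : ℂ) * fourierC f n)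
      refine h4.congr_deriv ?_
      rw [fourierC_deriv hf hp]; ring)
    (by
      intro n x
      rw [norm_mul _ (Complex.exp _), norm_e, mul_one])
    (h1.2 0).summable θ
  have h5 := Complex.reCLM.hasFDerivAt.comp_hasDerivAt θ key
  exact h5

lemma slice_smooth {I : Set ℝ} {u : ℝ → ℝ → ℝ}
    (hu : ContDiffOn ℝ (⊤ : ℕ∞) (fun p : ℝ × ℝ => u p.1 p.2) (I ×ˢ Set.univ))
    {t : ℝ} (ht : t ∈ I) : ContDiff ℝ (⊤ : ℕ∞) (u t) := by
  have := hu.comp_contDiff (f := fun θ : ℝ => (t, θ)) (by fun_prop) (fun x => by simp [ht])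
  exact this

lemma fderivWithin_smooth {I : Set ℝ} (hU : UniqueDiffOn ℝ I) {u : ℝ → ℝ → ℝ}
    (hu : ContDiffOn ℝ (⊤ : ℕ∞) (fun p : ℝ × ℝ => u p.1 p.2) (I ×ˢ Set.univ)) (v : ℝ × ℝ) :
    ContDiffOn ℝ (⊤ : ℕ∞) (fun p => fderivWithin ℝ (fun p : ℝ × ℝ => u p.1 p.2)
      (I ×ˢ Set.univ) p v) (I ×ˢ Set.univ) := by
  have h := hu.fderivWithin (m := (⊤ : ℕ∞)) (hU.prod uniqueDiffOn_univ) (by simp)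
  exact h.clm_apply contDiffOn_const

lemma dtheta_smooth {I : Set ℝ} (hU : UniqueDiffOn ℝ I) {u : ℝ → ℝ → ℝ}
    (hu : ContDiffOn ℝ (⊤ : ℕ∞) (fun p : ℝ × ℝ => u p.1 p.2) (I ×ˢ Set.univ)) :
    ContDiffOn ℝ (⊤ : ℕ∞) (fun p : ℝ × ℝ => deriv (u p.1) p.2) (I ×ˢ Set.univ) := by
  refine (fderivWithin_smooth hU hu (0, 1)).congr ?_
  rintro ⟨t, θ⟩ hp
  have h1 := ((hu.differentiableOn (by simp)) (t, θ) hp).hasFDerivWithinAt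
  have h2 : HasDerivAt (fun x : ℝ => (t, x)) ((0 : ℝ), (1 : ℝ)) θ :=
    (hasDerivAt_const θ t).prodMk (hasDerivAt_id θ)
  have h3 := h1.comp_hasDerivWithinAt (s := Set.univ) θ h2.hasDerivWithinAt
    (fun x _ => ⟨hp.1, trivial⟩)
  rw [hasDerivWithinAt_univ] at h3
  exact h3.deriv

lemma dt_hasDeriv {I : Set ℝ} {u : ℝ → ℝ → ℝ}
    (hu : ContDiffOn ℝ (⊤ : ℕ∞) (fun p : ℝ × ℝ => u p.1 p.2) (I ×ˢ Set.univ))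
    {t : ℝ} (ht : t ∈ I) (θ : ℝ) :
    HasDerivWithinAt (fun s => u s θ) (fderivWithin ℝ (fun p : ℝ × ℝ => u p.1 p.2)
      (I ×ˢ Set.univ) (t, θ) (1, 0)) I t := by
  have h1 := ((hu.differentiableOn (by simp)) (t, θ) ⟨ht, trivial⟩).hasFDerivWithinAt
  have h2 : HasDerivAt (fun x : ℝ => (x, θ)) ((1 : ℝ), (0 : ℝ)) t :=
    (hasDerivAt_id t).prodMk (hasDerivAt_const t θ)
  have h3 := h1.comp_hasDerivWithinAt_of_eq (s := I) t (f := fun x : ℝ => (x, θ))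
    h2.hasDerivWithinAt (fun x hx => ⟨hx, trivial⟩) rfl
  exact h3

lemma dt_smooth {I : Set ℝ} (hU : UniqueDiffOn ℝ I) {u : ℝ → ℝ → ℝ}
    (hu : ContDiffOn ℝ (⊤ : ℕ∞) (fun p : ℝ × ℝ => u p.1 p.2) (I ×ˢ Set.univ))
    {t : ℝ} (ht : t ∈ I) :
    ContDiff ℝ (⊤ : ℕ∞) (fun θ => derivWithin (fun s => u s θ) I t) := by
  have h := (fderivWithin_smooth hU hu (1, 0)).comp_contDiff (f := fun θ : ℝ => (t, θ))
    (by fun_prop) (fun x => by simp [ht])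
  convert h using 1
  funext θ
  exact (dt_hasDeriv hu ht θ).derivWithin (hU t ht)

lemma lip_bound {I : Set ℝ} (hI : Convex ℝ I) {u : ℝ → ℝ → ℝ}
    (hu : ContDiffOn ℝ (⊤ : ℕ∞) (fun p : ℝ × ℝ => u p.1 p.2) (I ×ˢ Set.univ))
    {t : ℝ} (ht : t ∈ I) :
    ∃ K : ℝ, 0 ≤ K ∧ ∀ᶠ s in 𝓝[I] t, ∀ θ ∈ Set.Icc 0 (2 * π), |u s θ - u t θ| ≤ K * |s - t| := by
  refine (isCompact_Icc (a := (0:ℝ)) (b := 2 * π)).induction_on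
    (p := fun A => ∃ K : ℝ, 0 ≤ K ∧ ∀ᶠ s in 𝓝[I] t, ∀ θ ∈ A, |u s θ - u t θ| ≤ K * |s - t|)
    ⟨0, le_rfl, by simp⟩ ?_ ?_ ?_
  · rintro A B hAB ⟨K, hK, h⟩
    exact ⟨K, hK, h.mono fun s hs θ hθ => hs θ (hAB hθ)⟩
  · rintro A B ⟨K, hK, h⟩ ⟨L, hL, h'⟩
    refine ⟨K + L, by positivity, ?_⟩
    filter_upwards [h, h'] with s hs hs' θ hθ
    have := abs_nonneg (s - t)
    rcases hθ with hθ | hθ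
    · nlinarith [hs θ hθ]
    · nlinarith [hs' θ hθ]
  · intro θ _
    have h1 : ContDiffWithinAt ℝ 1 (fun p : ℝ × ℝ => u p.1 p.2) (I ×ˢ Set.univ) (t, θ) :=
      (hu (t, θ) ⟨ht, trivial⟩).of_le (by exact_mod_cast le_top)
    obtain ⟨K, N, hN, hL⟩ := h1.exists_lipschitzOnWith (hI.prod convex_univ)
    obtain ⟨U, hU, V, hV, hUV⟩ := mem_nhdsWithin_prod_iff.mp hN
    rw [nhdsWithin_univ] at hV
    refine ⟨V, mem_nhdsWithin_of_mem_nhds hV, K, K.2, ?_⟩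
    filter_upwards [hU] with s hs x hx
    have hs1 : (s, x) ∈ U ×ˢ V := ⟨hs, hx⟩
    have hs2 : (t, x) ∈ U ×ˢ V := ⟨mem_of_mem_nhdsWithin ht hU, hx⟩
    have h2 := hL.norm_sub_le (hUV hs1) (hUV hs2)
    simpa [Prod.norm_def] using h2

lemma fourierC_sub {f g : ℝ → ℝ} (hf : Continuous f) (hg : Continuous g) (n : ℤ) :
    fourierC f n - fourierC g n = fourierC (fun x => f x - g x) n := by
  unfold fourierC
  rw [← mul_sub, ← intervalIntegral.integral_sub (Continuous.intervalIntegrable (by fun_prop) _ _)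
    (Continuous.intervalIntegrable (by fun_prop) _ _)]
  congr 2; funext x; push_cast; ring

lemma fourierC_const_mul (c : ℝ) (f : ℝ → ℝ) (n : ℤ) :
    fourierC (fun x => c * f x) n = c * fourierC f n := by
  unfold fourierC
  rw [mul_left_comm (c : ℂ), ← intervalIntegral.integral_const_mul (c : ℂ)]
  congr 2; funext x; push_cast; ring

lemma fourierC_hasDeriv {I : Set ℝ} (hI : Convex ℝ I) (hU : UniqueDiffOn ℝ I) {u : ℝ → ℝ → ℝ}
    (hu : ContDiffOn ℝ (⊤ : ℕ∞) (fun p : ℝ × ℝ => u p.1 p.2) (I ×ˢ Set.univ))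
    {t : ℝ} (ht : t ∈ I) (n : ℤ) :
    HasDerivWithinAt (fun s => fourierC (u s) n)
      (fourierC (fun θ => derivWithin (fun s => u s θ) I t) n) I t := by
  have hle : 𝓝[I \ {t}] t ≤ 𝓝[I] t := nhdsWithin_mono _ Set.sdiff_subset
  have hmem : ∀ᶠ s in 𝓝[I \ {t}] t, s ∈ I \ {t} := self_mem_nhdsWithin
  rw [hasDerivWithinAt_iff_tendsto_slope]
  obtain ⟨K, hK, hlip⟩ := lip_bound hI hu ht
  have key : Tendsto (fun s => fourierC (fun θ => (s - t)⁻¹ * (u s θ - u t θ)) n) (𝓝[I \ {t}] t)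
      (𝓝 (fourierC (fun θ => derivWithin (fun s => u s θ) I t) n)) := by
    unfold fourierC
    apply Tendsto.const_mul
    apply intervalIntegral.tendsto_integral_filter_of_dominated_convergence (fun _ => K)
    · filter_upwards [hmem] with s hs
      have c1 := (slice_smooth hu hs.1).continuous
      have c2 := (slice_smooth hu ht).continuous
      apply Continuous.aestronglyMeasurable
      fun_prop
    · filter_upwards [hmem, hle hlip] with s hs hb
      refine Eventually.of_forall fun x hx => ?_
      rw [Set.uIoc_of_le (by positivity)] at hx
      rw [norm_mul, norm_e', mul_one, Complex.norm_real, norm_mul, norm_inv, Real.norm_eq_abs,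
        Real.norm_eq_abs]
      have hne : 0 < |s - t| := abs_pos.mpr (sub_ne_zero.mpr hs.2)
      rw [inv_mul_le_iff₀ hne]
      linarith [hb x ⟨hx.1.le, hx.2⟩]
    · simp
    · refine Eventually.of_forall fun x _ => ?_
      apply Tendsto.mul_const
      have h1 := (dt_hasDeriv hu ht x).differentiableWithinAt.hasDerivWithinAt
      rw [hasDerivWithinAt_iff_tendsto_slope] at h1
      have h2 := (Complex.continuous_ofReal.tendsto _).comp h1
      refine h2.congr fun s => ?_
      simp [slope_def_field, div_eq_inv_mul]
  refine key.congr' ?_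
  filter_upwards [hmem] with s hs
  rw [fourierC_const_mul, ← fourierC_sub (slice_smooth hu hs.1).continuous
    (slice_smooth hu ht).continuous, slope_def_module, Complex.real_smul]

lemma hilbert_hasDeriv_time {I : Set ℝ} (hI : Convex ℝ I) (hU : UniqueDiffOn ℝ I)
    {u : ℝ → ℝ → ℝ}
    (hu : ContDiffOn ℝ (⊤ : ℕ∞) (fun p : ℝ × ℝ => u p.1 p.2) (I ×ˢ Set.univ))
    (hper : ∀ t ∈ I, ∀ θ : ℝ, u t (θ + 2 * π) = u t θ)
    {t : ℝ} (ht : t ∈ I) (θ : ℝ) :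
    HasDerivWithinAt (fun s => hilbertT (u s) θ)
      (hilbertT (fun θ => derivWithin (fun s => u s θ) I t) θ) I t := by
  have hle : 𝓝[I \ {t}] t ≤ 𝓝[I] t := nhdsWithin_mono _ Set.sdiff_subset
  have hmem : ∀ᶠ s in 𝓝[I \ {t}] t, s ∈ I \ {t} := self_mem_nhdsWithin
  obtain ⟨K, hK, hlip⟩ := lip_bound (u := fun s => deriv (deriv (u s))) hI
    (dtheta_smooth (u := fun s => deriv (u s)) hU (dtheta_smooth hU hu)) ht
  let G : ℤ → ℝ → ℂ := fun n s => -Complex.I * ((n.sign : ℤ) : ℂ) * fourierC (u s) n *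
    Complex.exp (Complex.I * (n : ℂ) * (θ : ℂ))
  have hGs : ∀ s ∈ I, Summable (fun n => G n s) := fun s hs =>
    ((smooth_isC (slice_smooth hu hs) (hper s hs)).hilbert.2 θ).summable
  have key : HasDerivWithinAt (fun s => ∑' n, G n s) (∑' n : ℤ, -Complex.I * ((n.sign : ℤ) : ℂ) *
      fourierC (fun θ => derivWithin (fun s => u s θ) I t) n *
      Complex.exp (Complex.I * (n : ℂ) * (θ : ℂ))) I t := by
    rw [hasDerivWithinAt_iff_tendsto_slope]
    have h1 : Tendsto (fun s => ∑' n, slope (G n) t s) (𝓝[I \ {t}] t)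
        (𝓝 (∑' n : ℤ, -Complex.I * ((n.sign : ℤ) : ℂ) *
      fourierC (fun θ => derivWithin (fun s => u s θ) I t) n *
      Complex.exp (Complex.I * (n : ℂ) * (θ : ℂ)))) := by
      apply tendsto_tsum_of_dominated_convergence (bound := fun n : ℤ => K * (1 / (n : ℝ) ^ 2))
      · exact (Real.summable_one_div_int_pow.mpr (by norm_num)).mul_left K
      · intro n
        have := ((fourierC_hasDeriv hI hU hu ht n).const_mul
          (-Complex.I * ((n.sign : ℤ) : ℂ))).mul_const
            (Complex.exp (Complex.I * (n : ℂ) * (θ : ℂ)))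
        rw [hasDerivWithinAt_iff_tendsto_slope] at this
        exact this
      · filter_upwards [hmem, hle hlip] with s hs hb n
        have hne : 0 < |s - t| := abs_pos.mpr (sub_ne_zero.mpr hs.2)
        rw [slope_def_module, norm_smul, norm_inv, Real.norm_eq_abs, inv_mul_le_iff₀ hne]
        have e : G n s - G n t = (-Complex.I * ((n.sign : ℤ) : ℂ) *
            (fourierC (u s) n - fourierC (u t) n)) *
            Complex.exp (Complex.I * (n : ℂ) * (θ : ℂ)) := by
          simp only [G]; ring
        rw [e, norm_mul, norm_e, mul_one]
        rcases eq_or_ne n 0 with hn | hn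
        · simp [hn]
        refine (norm_sign_mul_le n _).trans ?_
        have hs1 := slice_smooth hu hs.1
        have hs2 := slice_smooth hu ht
        have h3 := fourierC_norm_le (f := fun x => deriv (deriv (u s)) x - deriv (deriv (u t)) x)
          hb n
        rw [← fourierC_sub (smooth_deriv (smooth_deriv hs1)).continuous
          (smooth_deriv (smooth_deriv hs2)).continuous, fourierC_deriv2 hs1 (hper s hs.1),
          fourierC_deriv2 hs2 (hper t ht), ← mul_sub, norm_mul] at h3
        have e2 : ‖-(n : ℂ) ^ 2‖ = (n : ℝ) ^ 2 := by simp
        rw [e2] at h3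
        have hn' : 0 < (n : ℝ) ^ 2 := by positivity
        have e3 : |s - t| * (K * (1 / (n : ℝ) ^ 2)) = (K * |s - t|) / (n : ℝ) ^ 2 := by ring
        rw [e3, le_div_iff₀ hn']
        linarith
    refine h1.congr' ?_
    filter_upwards [hmem] with s hs
    simp only [slope_def_module]
    rw [tsum_const_smul'', (hGs s hs.1).tsum_sub (hGs t ht)]
  exact Complex.reCLM.hasFDerivAt.comp_hasDerivWithinAt t key

lemma fourierC_deriv_zero {f : ℝ → ℝ} (hf : ContDiff ℝ (⊤ : ℕ∞) f)
    (hp : ∀ x, f (x + 2 * π) = f x) : fourierC (deriv f) 0 = 0 := by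
  rw [fourierC_deriv hf hp]; simp

/-- The algebraic heart: at a fixed time, with `w` playing the role of `u_{θ t}`. -/
lemma fixed_time {f w : ℝ → ℝ} (hf : ContDiff ℝ (⊤ : ℕ∞) f) (hp : ∀ x, f (x + 2 * π) = f x)
    (hw : ContDiff ℝ (⊤ : ℕ∞) w) (hwp : ∀ x, w (x + 2 * π) = w x) (hw0 : fourierC w 0 = 0)
    (h : ∀ θ, hilbertT w θ + f θ * deriv (fun x => hilbertT (deriv f) x) θ
        + 2 * deriv f θ * hilbertT (deriv f) θ = 0) (θ : ℝ) :
    w θ + f θ * deriv (deriv f) θ + (deriv f θ) ^ 2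
        = f θ * deriv (deriv f) θ
          + hilbertT (fun x => f x * hilbertT (deriv (deriv f)) x) θ
          + (hilbertT (deriv f) θ) ^ 2 := by
  have f1 := smooth_deriv hf
  have p1 := periodic_deriv hp
  have cf := smooth_isC hf hp
  have c1 := smooth_isC f1 p1
  have c2 := smooth_isC (smooth_deriv f1) (periodic_deriv p1)
  have cw := smooth_isC hw hwp
  have hd : ∀ x, deriv (fun x => hilbertT (deriv f) x) x = hilbertT (deriv (deriv f)) x :=
    fun x => (hilbert_hasDerivAt f1 p1 x).deriv
  have q1 := hilbert_quad c1 (fourierC_deriv_zero hf hp) θ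
  have q2 := hilbert_hilbert cw hw0 θ
  have m1 := cf.mul c2.hilbert
  have m2 := c1.mul c1.hilbert
  obtain ⟨b1, m1'⟩ : ∃ b, IsC (fun x => ((f x * hilbertT (deriv (deriv f)) x : ℝ) : ℂ)) b :=
    ⟨_, by simpa only [Complex.ofReal_mul] using m1⟩
  obtain ⟨b2, m2'⟩ : ∃ b, IsC (fun x => ((deriv f x * hilbertT (deriv f) x : ℝ) : ℂ)) b :=
    ⟨_, by simpa only [Complex.ofReal_mul] using m2⟩
  obtain ⟨b3, m3⟩ : ∃ b, IsC (fun x => ((2 * (deriv f x * hilbertT (deriv f) x) : ℝ) : ℂ)) b :=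
    ⟨_, by simpa only [Complex.ofReal_mul] using m2'.const_mul ((2 : ℝ) : ℂ)⟩
  have a1 := hilbert_add m1' m3 θ
  have a2 := hilbert_const_mul 2 m2' θ
  obtain ⟨b4, cs⟩ : ∃ b, IsC (fun x => ((f x * hilbertT (deriv (deriv f)) x +
      2 * (deriv f x * hilbertT (deriv f) x) : ℝ) : ℂ)) b :=
    ⟨_, by simpa only [Complex.ofReal_add] using m1'.add m3⟩
  have a3 := hilbert_const_mul (-1) cs θ
  have e : hilbertT w = fun x => -1 * (f x * hilbertT (deriv (deriv f)) x +
      2 * (deriv f x * hilbertT (deriv f) x)) := by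
    funext x
    have := h x
    rw [hd] at this
    linarith
  rw [e, a3, a1, a2] at q2
  linarith

/-- Eulerian rewriting of the Wunsch equation: if
`ω_t + u ω_θ + 2 u_θ ω = 0` with `ω = H(u_θ)` for mean-zero `u`, then
`u_{tθ} + u u_{θθ} + u_θ² = −F + ω²` with `F = −u u_{θθ} − H(u H(u_{θθ}))`. -/
theorem wunsch_eulerian_rewrite (I : Set ℝ) (hI : I.OrdConnected)
    (u : ℝ → ℝ → ℝ)
    (hu : ContDiffOn ℝ (⊤ : ℕ∞) (fun p : ℝ × ℝ => u p.1 p.2) (I ×ˢ Set.univ))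
    (hper : ∀ t ∈ I, ∀ θ : ℝ, u t (θ + 2 * π) = u t θ)
    (hmean : ∀ t ∈ I, (∫ θ in (0:ℝ)..(2 * π), u t θ) = 0)
    (hpde : ∀ t ∈ I, ∀ θ : ℝ,
      derivWithin (fun s => hilbertT (deriv (u s)) θ) I t
        + u t θ * deriv (fun x => hilbertT (deriv (u t)) x) θ
        + 2 * deriv (u t) θ * hilbertT (deriv (u t)) θ = 0) :
    ∀ t ∈ I, ∀ θ : ℝ,
      derivWithin (fun s => deriv (u s) θ) I t
          + u t θ * deriv (deriv (u t)) θ + (deriv (u t) θ) ^ 2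
        = u t θ * deriv (deriv (u t)) θ
          + hilbertT (fun x => u t x * hilbertT (deriv (deriv (u t))) x) θ
          + (hilbertT (deriv (u t)) θ) ^ 2 := by
  intro t ht θ
  have hf := slice_smooth hu ht
  have hIc : Convex ℝ I := hI.convex
  by_cases hacc : AccPt t (𝓟 I)
  · have hU : UniqueDiffOn ℝ I := by
      apply uniqueDiffOn_convex hIc
      obtain ⟨y, ⟨_, hy⟩, hne⟩ := accPt_iff_nhds.mp hacc Set.univ univ_mem
      rcases lt_or_gt_of_ne hne with hlt | hlt
      · have h1 : Set.Ioo y t ⊆ interior I :=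
          interior_maximal (Set.Ioo_subset_Icc_self.trans (hI.out hy ht)) isOpen_Ioo
        exact (Set.nonempty_Ioo.mpr hlt).mono h1
      · have h1 : Set.Ioo t y ⊆ interior I :=
          interior_maximal (Set.Ioo_subset_Icc_self.trans (hI.out ht hy)) isOpen_Ioo
        exact (Set.nonempty_Ioo.mpr hlt).mono h1
    have hu1 := dtheta_smooth hU hu
    have hper1 : ∀ t ∈ I, ∀ θ : ℝ, deriv (u t) (θ + 2 * π) = deriv (u t) θ :=
      fun s hs => periodic_deriv (hper s hs)
    refine fixed_time (w := fun θ => derivWithin (fun s => deriv (u s) θ) I t) hf (hper t ht)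
      (dt_smooth hU (u := fun s => deriv (u s)) hu1 ht) ?_ ?_ ?_ θ
    · intro x
      apply derivWithin_congr
      · intro s hs; exact hper1 s hs x
      · exact hper1 t ht x
    · have h1 := (fourierC_hasDeriv hIc hU (u := fun s => deriv (u s)) hu1 ht 0).derivWithin
        (hU t ht)
      rw [← h1]
      have h2 : derivWithin (fun s => fourierC (deriv (u s)) 0) I t =
          derivWithin (fun _ => (0 : ℂ)) I t := by
        apply derivWithin_congr
        · intro s hs; exact fourierC_deriv_zero (slice_smooth hu hs) (hper s hs)
        · exact fourierC_deriv_zero hf (hper t ht)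
      rw [h2]; simp
    · intro x
      rw [← (hilbert_hasDeriv_time hIc hU (u := fun s => deriv (u s)) hu1 hper1 ht x).derivWithin
        (hU t ht)]
      exact hpde t ht x
  · rw [derivWithin_zero_of_not_accPt hacc]
    have hz : ∀ n, fourierC (fun _ => 0) n = 0 := fun n => by simp [fourierC]
    refine fixed_time (w := fun _ => 0) hf (hper t ht) contDiff_const (fun _ => rfl) (hz 0) ?_ θ
    intro x
    have h1 := hpde t ht x
    rw [derivWithin_zero_of_not_accPt hacc] at h1
    have h2 : hilbertT (fun _ => 0) x = 0 := by simp [hilbertT, hz]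
    rw [h2]; exact h1
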